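/- arXiv:1510.08207 — 2 statements merged into one kernel-verified Lean document; each statement's English description precedes it below -/
import Mathlib

section
/- Let p be a prime and let R be a noncommutative (not necessarily unital) finite ring whose order is a power of p. Then |Cent(R)| ≥ p + 2, and equality |Cent(R)| = p + 2 holds if and only if the additive quotient group R/Z(R) is isomorphic (as an additive group) to ℤ_p × ℤ_p. -/
/-- The centralizer of `r` in a (not necessarily unital) ring: `{s | r*s = s*r}`. -/
def rCentralizer {R : Type*} [NonUnitalRing R] (r : R) : Set R := {s | r * s = s * r}

/-- The set of all centralizers of elements of `R`. -/
def Cent (R : Type*) [NonUnitalRing R] : Set (Set R) :=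
  Set.range (fun r : R => rCentralizer r)

/-- The center of a (not necessarily unital) ring, as a set. -/
def rCenter (R : Type*) [NonUnitalRing R] : Set R := {s | ∀ r : R, r * s = s * r}

/-- The center of a (not necessarily unital) ring, as an additive subgroup. -/
def centerAddSubgroup (R : Type*) [NonUnitalRing R] : AddSubgroup R where
  carrier := {s | ∀ r : R, r * s = s * r}
  zero_mem' := by intro r; rw [mul_zero, zero_mul]
  add_mem' := by intro a b ha hb r; rw [mul_add, add_mul, ha r, hb r]
  neg_mem' := by intro a ha r; rw [mul_neg, neg_mul, ha r]

/-!
Modulo the center, the proper centralizers cover `R / Z(R)` by proper subgroups with trivial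
intersection. If a finite group `G` is covered by a family `S` of proper subgroups of index at least
`m`, then for each `H ∈ S` the other members of `S` cover the complement of `H`, and each of them
meets that complement in at most a proportion `1 / m` of its elements; so `#S - 1 ≥ m`. In the case
`#S = m + 1` the other members have index exactly `m` and partition the complement of `H`. As `H` is
arbitrary, any two members of `S` then meet in the intersection of all of them, which has index
`m ^ 2`. Conversely, in a group of order `p ^ 2` the nontrivial proper subgroups have order `p` and
are disjoint away from `0`, so there are at most `p + 1` of them.
-/

open Finset

/-- A finite family of proper subgroups whose union is the whole group. -/
structure IsProperCover {G : Type*} [AddGroup G] (S : Finset (AddSubgroup G)) : Prop where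
  exists_mem : ∀ g, ∃ K ∈ S, g ∈ K
  ne_top : ∀ K ∈ S, K ≠ ⊤

lemma IsProperCover.nonempty {G : Type*} [AddGroup G] {S : Finset (AddSubgroup G)}
    (hS : IsProperCover S) : S.Nonempty :=
  (hS.exists_mem 0).imp fun _ => And.left

lemma IsProperCover.not_isAddCyclic {G : Type*} [AddGroup G] {S : Finset (AddSubgroup G)}
    (hS : IsProperCover S) : ¬ IsAddCyclic G := by
  rintro ⟨g, hg⟩
  obtain ⟨K, hK, hgK⟩ := hS.exists_mem g
  exact hS.ne_top K hK (eq_top_iff.2 fun x _ => AddSubgroup.zmultiples_le_of_mem hgK (hg x))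

lemma pairwiseDisjoint_of_sum_ncard_le_ncard_biUnion {ι α : Type*} {t : Finset ι} {s : ι → Set α}
    (hs : ∀ i ∈ t, (s i).Finite) (hle : ∑ i ∈ t, (s i).ncard ≤ (⋃ i ∈ t, s i).ncard) :
    (t : Set ι).PairwiseDisjoint s := by
  classical
  intro i hi j hj hij
  let others := ⋃ k ∈ t.erase i, s k
  have hothers : others.Finite :=
    (t.erase i).finite_toSet.biUnion fun k hk => hs k (mem_of_mem_erase hk)
  have hunion : s i ∪ others = ⋃ k ∈ t, s k := by
    rw [← set_biUnion_insert, insert_erase hi]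
  have hsum := add_sum_erase t (fun k => (s k).ncard) hi
  have hinter := Set.ncard_union_add_ncard_inter (s i) others (hs i hi) hothers
  have hothers_le : others.ncard ≤ ∑ k ∈ t.erase i, (s k).ncard := set_ncard_biUnion_le _ _
  rw [hunion] at hinter
  have hempty : s i ∩ others = ∅ :=
    (Set.ncard_eq_zero ((hs i hi).inter_of_left _)).1 (by lia)
  exact (Set.disjoint_iff_inter_eq_empty.2 hempty).mono_right
    (Set.subset_biUnion_of_mem (u := s) (mem_erase.2 ⟨hij.symm, hj⟩))

lemma IsProperCover.biUnion_erase_sdiff {G : Type*} [AddGroup G] [DecidableEq (AddSubgroup G)]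
    {S : Finset (AddSubgroup G)} (hS : IsProperCover S) (H : AddSubgroup G) :
    ⋃ K ∈ S.erase H, (K \ H : Set G) = (H : Set G)ᶜ := by
  refine Set.Subset.antisymm (Set.iUnion₂_subset fun K _ g hg => hg.2) fun g hg => ?_
  obtain ⟨K, hK, hgK⟩ := hS.exists_mem g
  exact Set.mem_biUnion (mem_erase.2 ⟨fun h => hg (h ▸ hgK), hK⟩) ⟨hgK, hg⟩

lemma IsProperCover.ncard_compl_le_sum_ncard_sdiff {G : Type*} [AddGroup G]
    [DecidableEq (AddSubgroup G)] {S : Finset (AddSubgroup G)} (hS : IsProperCover S)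
    (H : AddSubgroup G) : ((H : Set G)ᶜ).ncard ≤ ∑ K ∈ S.erase H, (K \ H : Set G).ncard :=
  hS.biUnion_erase_sdiff H ▸ set_ncard_biUnion_le _ _

lemma le_index_of_forall_prime_dvd_card {G : Type*} [AddGroup G] {p : ℕ}
    (hp : ∀ q : ℕ, q.Prime → q ∣ Nat.card G → p ≤ q) {K : AddSubgroup G} [K.FiniteIndex]
    (hK : K ≠ ⊤) : p ≤ K.index :=
  have hindex : K.index ≠ 1 := fun h => hK (AddSubgroup.index_eq_one.1 h)
  (hp _ (Nat.minFac_prime hindex) ((Nat.minFac_dvd _).trans K.index_dvd_card)).trans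
    (Nat.minFac_le AddSubgroup.FiniteIndex.index_ne_zero.bot_lt)

lemma card_le_index_mul_card_inf {G : Type*} [AddGroup G] (H K : AddSubgroup G) [K.FiniteIndex] :
    Nat.card H ≤ K.index * Nat.card (H ⊓ K : AddSubgroup G) := by
  have hinf : Nat.card H = K.relIndex H * Nat.card (H ⊓ K : AddSubgroup G) := by
    rw [← AddSubgroup.inf_relIndex_left, mul_comm, ← AddSubgroup.relIndex_bot_left,
      ← AddSubgroup.relIndex_bot_left,
      AddSubgroup.relIndex_mul_relIndex _ _ _ bot_le inf_le_left]
  have hle : K.relIndex H ≤ K.index := by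
    rw [← K.relIndex_top_right]
    exact AddSubgroup.relIndex_le_of_le_right le_top
      (K.relIndex_top_right.trans_ne AddSubgroup.FiniteIndex.index_ne_zero)
  exact hinf.trans_le (Nat.mul_le_mul_right _ hle)

lemma card_inf_add_ncard_sdiff {G : Type*} [AddGroup G] (H K : AddSubgroup G) [Finite K] :
    Nat.card (H ⊓ K : AddSubgroup G) + (K \ H : Set G).ncard = Nat.card K := by
  rw [inf_comm]
  exact Set.ncard_inter_add_ncard_sdiff_eq_ncard (K : Set G) H

section FiniteGroup

variable {G : Type*} [AddGroup G] [Finite G]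

lemma card_add_ncard_compl (H : AddSubgroup G) :
    Nat.card H + ((H : Set G)ᶜ).ncard = Nat.card G :=
  Set.ncard_add_ncard_compl (H : Set G)

lemma index_mul_ncard_sdiff_le (H K : AddSubgroup G) :
    K.index * (K \ H : Set G).ncard ≤ ((H : Set G)ᶜ).ncard := by
  have hK : K.index * (Nat.card (H ⊓ K : AddSubgroup G) + (K \ H : Set G).ncard) = Nat.card G := by
    rw [card_inf_add_ncard_sdiff, K.index_mul_card]
  have hH := card_add_ncard_compl H
  have hinf := card_le_index_mul_card_inf H K
  rw [mul_add] at hK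
  lia

lemma ncard_compl_pos {H : AddSubgroup G} (hH : H ≠ ⊤) : 0 < ((H : Set G)ᶜ).ncard := by
  rwa [Set.ncard_pos, Set.nonempty_compl, Ne, AddSubgroup.coe_eq_univ]

lemma mul_ncard_sdiff_le {K : AddSubgroup G} {m : ℕ} (hm : m ≤ K.index) (H : AddSubgroup G) :
    m * (K \ H : Set G).ncard ≤ ((H : Set G)ᶜ).ncard :=
  (Nat.mul_le_mul_right _ hm).trans (index_mul_ncard_sdiff_le H K)

lemma mul_sum_ncard_sdiff_le {T : Finset (AddSubgroup G)} {m : ℕ} (hm : ∀ K ∈ T, m ≤ K.index)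
    (H : AddSubgroup G) :
    m * ∑ K ∈ T, (K \ H : Set G).ncard ≤ #T * ((H : Set G)ᶜ).ncard := by
  rw [mul_sum, ← smul_eq_mul #T]
  exact sum_le_card_nsmul _ _ _ fun K hK => mul_ncard_sdiff_le (hm K hK) H

namespace IsProperCover

variable {S : Finset (AddSubgroup G)} {m : ℕ} {H K L : AddSubgroup G}

theorem add_one_le_card (hS : IsProperCover S) (hm : ∀ K ∈ S, m ≤ K.index) : m + 1 ≤ #S := by
  classical
  obtain ⟨H, hH⟩ := hS.nonempty
  have hle : m * ((H : Set G)ᶜ).ncard ≤ #(S.erase H) * ((H : Set G)ᶜ).ncard :=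
    (Nat.mul_le_mul_left m (hS.ncard_compl_le_sum_ncard_sdiff H)).trans
      (mul_sum_ncard_sdiff_le (fun K hK => hm K (mem_of_mem_erase hK)) H)
  rw [← card_erase_add_one hH]
  exact Nat.succ_le_succ (Nat.le_of_mul_le_mul_right hle (ncard_compl_pos (hS.ne_top H hH)))

lemma one_lt_card (hS : IsProperCover S) : 1 < #S :=
  hS.add_one_le_card fun K _ => Nat.one_le_iff_ne_zero.2 K.index_ne_zero_of_finite

lemma sum_ncard_sdiff_eq [DecidableEq (AddSubgroup G)] (hS : IsProperCover S)
    (hm : ∀ K ∈ S, m ≤ K.index) (hcard : #S = m + 1) (hH : H ∈ S) :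
    ∑ K ∈ S.erase H, (K \ H : Set G).ncard = ((H : Set G)ᶜ).ncard := by
  have hm₀ : 0 < m := by have := hS.one_lt_card; lia
  have hle := mul_sum_ncard_sdiff_le (T := S.erase H) (fun K hK => hm K (mem_of_mem_erase hK)) H
  rw [card_erase_of_mem hH, hcard, Nat.add_sub_cancel] at hle
  exact (Nat.le_of_mul_le_mul_left hle hm₀).antisymm (hS.ncard_compl_le_sum_ncard_sdiff H)

lemma inf_le (hS : IsProperCover S) (hm : ∀ K ∈ S, m ≤ K.index) (hcard : #S = m + 1)
    (hH : H ∈ S) (hK : K ∈ S) (hL : L ∈ S) (hne : H ≠ K) : H ⊓ K ≤ L := by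
  classical
  rintro g ⟨hgH, hgK⟩
  by_contra hgL
  have hdisj : ((S.erase L : Finset (AddSubgroup G)) : Set (AddSubgroup G)).PairwiseDisjoint
      fun K => (K \ L : Set G) := by
    refine pairwiseDisjoint_of_sum_ncard_le_ncard_biUnion (fun _ _ => Set.toFinite _) ?_
    rw [hS.biUnion_erase_sdiff, hS.sum_ncard_sdiff_eq hm hcard hL]
  have hHL : H ∈ S.erase L := mem_erase.2 ⟨fun h => hgL (h ▸ hgH), hH⟩
  have hKL : K ∈ S.erase L := mem_erase.2 ⟨fun h => hgL (h ▸ hgK), hK⟩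
  exact Set.disjoint_left.1 (hdisj hHL hKL hne) ⟨hgH, hgL⟩ ⟨hgK, hgL⟩

lemma mul_ncard_sdiff_eq (hS : IsProperCover S) (hm : ∀ K ∈ S, m ≤ K.index) (hcard : #S = m + 1)
    (hH : H ∈ S) (hK : K ∈ S) (hne : H ≠ K) :
    m * (K \ H : Set G).ncard = ((H : Set G)ᶜ).ncard := by
  classical
  have hsum : ∑ K ∈ S.erase H, m * (K \ H : Set G).ncard =
      ∑ _K ∈ S.erase H, ((H : Set G)ᶜ).ncard := by
    rw [← mul_sum, sum_const, smul_eq_mul, hS.sum_ncard_sdiff_eq hm hcard hH,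
      card_erase_of_mem hH, hcard, Nat.add_sub_cancel]
  exact (sum_eq_sum_iff_of_le fun K hK =>
    mul_ncard_sdiff_le (hm K (mem_of_mem_erase hK)) H).1 hsum K (mem_erase.2 ⟨hne.symm, hK⟩)

lemma index_eq (hS : IsProperCover S) (hm : ∀ K ∈ S, m ≤ K.index) (hcard : #S = m + 1)
    (hK : K ∈ S) : K.index = m := by
  obtain ⟨H, hH, hne⟩ := exists_mem_ne hS.one_lt_card K
  have heq := hS.mul_ncard_sdiff_eq hm hcard hH hK hne
  have hpos : 0 < (K \ H : Set G).ncard :=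
    Nat.pos_of_mul_pos_left (heq ▸ ncard_compl_pos (hS.ne_top H hH))
  refine (Nat.le_of_mul_le_mul_right ?_ hpos).antisymm (hm K hK)
  exact (index_mul_ncard_sdiff_le H K).trans_eq heq.symm

lemma index_inf_eq_sq (hS : IsProperCover S) (hm : ∀ K ∈ S, m ≤ K.index) (hcard : #S = m + 1)
    (hH : H ∈ S) (hK : K ∈ S) (hne : H ≠ K) : (H ⊓ K).index = m ^ 2 := by
  have hHG : m * Nat.card H = Nat.card G := hS.index_eq hm hcard hH ▸ H.index_mul_card
  have hKG : m * Nat.card K = Nat.card G := hS.index_eq hm hcard hK ▸ K.index_mul_card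
  have hinf : m * Nat.card (H ⊓ K : AddSubgroup G) = Nat.card H := by
    rw [← card_inf_add_ncard_sdiff H K, mul_add, hS.mul_ncard_sdiff_eq hm hcard hH hK hne,
      ← card_add_ncard_compl H] at hKG
    exact Nat.add_right_cancel hKG
  refine Nat.eq_of_mul_eq_mul_right (Nat.card_pos (α := (H ⊓ K : AddSubgroup G))) ?_
  rw [(H ⊓ K).index_mul_card, sq, mul_assoc, hinf, hHG]

end IsProperCover

lemma zmultiples_eq_of_card_prime {G : Type*} [AddGroup G] {K : AddSubgroup G}
    (hK : (Nat.card K).Prime) {g : G} (hgK : g ∈ K) (hg : g ≠ 0) :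
    AddSubgroup.zmultiples g = K := by
  have : Finite K := Nat.finite_of_card_ne_zero hK.ne_zero
  have horder : addOrderOf g = Nat.card K :=
    ((Nat.dvd_prime hK).1 (K.addOrderOf_dvd_natCard hgK)).resolve_left
      (mt AddMonoid.addOrderOf_eq_one_iff.1 hg)
  exact AddSubgroup.eq_of_le_of_card_ge (AddSubgroup.zmultiples_le_of_mem hgK)
    (horder.symm.trans (Nat.card_zmultiples g).symm).le

lemma card_mul_pred_le_card_pred {p : ℕ} (hp : p.Prime) {S : Finset (AddSubgroup G)}
    (hS : ∀ K ∈ S, Nat.card K = p) : #S * (p - 1) ≤ Nat.card G - 1 := by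
  classical
  have := Fintype.ofFinite G
  calc #S * (p - 1) ≤ #(univ.erase (0 : G)) * 1 := by
        refine card_mul_le_card_mul (fun K g => g ∈ K) (fun K hK => ?_) fun g hg => ?_
        · rw [bipartiteAbove, filter_erase, card_erase_of_mem (by simp), ← hS K hK,
            Nat.card_eq_fintype_card, Fintype.card_subtype]
        · refine card_le_one.2 fun K hK L hL => ?_
          rw [mem_bipartiteBelow] at hK hL
          have hg₀ := ne_of_mem_erase hg
          rw [← zmultiples_eq_of_card_prime ((hS K hK.1).symm ▸ hp) hK.2 hg₀,
            zmultiples_eq_of_card_prime ((hS L hL.1).symm ▸ hp) hL.2 hg₀]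
    _ = Nat.card G - 1 := by
        rw [mul_one, card_erase_of_mem (mem_univ _), card_univ, Nat.card_eq_fintype_card]

lemma card_eq_of_card_eq_prime_sq {p : ℕ} (hp : p.Prime) (hG : Nat.card G = p ^ 2)
    {K : AddSubgroup G} (hbot : K ≠ ⊥) (htop : K ≠ ⊤) : Nat.card K = p := by
  obtain ⟨i, hi, hK⟩ := (Nat.dvd_prime_pow hp).1 (hG ▸ K.card_addSubgroup_dvd_card)
  interval_cases i
  · exact absurd (K.eq_bot_of_card_eq (hK.trans (pow_zero p))) hbot
  · rwa [pow_one] at hK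
  · exact absurd (K.eq_top_of_card_eq (hK.trans hG.symm)) htop

lemma card_le_add_one_of_card_eq_prime_sq {p : ℕ} (hp : p.Prime) (hG : Nat.card G = p ^ 2)
    {S : Finset (AddSubgroup G)} (hbot : ∀ K ∈ S, K ≠ ⊥) (htop : ∀ K ∈ S, K ≠ ⊤) :
    #S ≤ p + 1 := by
  have hle := card_mul_pred_le_card_pred hp fun K hK =>
    card_eq_of_card_eq_prime_sq hp hG (hbot K hK) (htop K hK)
  rw [hG, ← one_pow 2, Nat.sq_sub_sq] at hle
  exact Nat.le_of_mul_le_mul_right hle (Nat.sub_pos_of_lt hp.one_lt)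

theorem IsProperCover.card_eq_add_one_iff {p : ℕ} (hp : p.Prime) {S : Finset (AddSubgroup G)}
    (hS : IsProperCover S) (hindex : ∀ K ∈ S, p ≤ K.index) (hbot : ∀ K ∈ S, K ≠ ⊥)
    (hinf : sInf (S : Set (AddSubgroup G)) = ⊥) : #S = p + 1 ↔ Nat.card G = p ^ 2 := by
  classical
  refine ⟨fun hcard => ?_, fun hG => ?_⟩
  · obtain ⟨H, hH, K, hK, hne⟩ := Finset.one_lt_card.1 hS.one_lt_card
    have hHK : H ⊓ K = ⊥ := eq_bot_iff.2 <|
      (le_sInf fun L hL => hS.inf_le hindex hcard hH hK hL hne).trans_eq hinf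
    rw [← hS.index_inf_eq_sq hindex hcard hH hK hne, hHK, AddSubgroup.index_bot]
  · exact (card_le_add_one_of_card_eq_prime_sq hp hG hbot hS.ne_top).antisymm
      (hS.add_one_le_card hindex)

end FiniteGroup

lemma nonempty_addEquiv_zmod_prod_zmod_iff {p : ℕ} (hp : p.Prime) {A : Type*} [AddCommGroup A]
    (hA : ¬ IsAddCyclic A) : Nonempty (A ≃+ ZMod p × ZMod p) ↔ Nat.card A = p ^ 2 := by
  have : Fact p.Prime := ⟨hp⟩
  refine ⟨fun ⟨e⟩ => by rw [Nat.card_congr e.toEquiv, Nat.card_prod, Nat.card_zmod, sq], ?_⟩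
  intro hcard
  have hexp : AddMonoid.exponent A = p := (not_isAddCyclic_iff_exponent_eq_prime hp hcard).1 hA
  have : Finite A := Nat.finite_of_card_ne_zero (hcard ▸ pow_ne_zero 2 hp.ne_zero)
  have : Module (ZMod p) A :=
    AddCommGroup.zmodModule fun a => hexp ▸ AddMonoid.exponent_nsmul_eq_zero a
  have hrank : Module.finrank (ZMod p) A = 2 := by
    refine Nat.pow_right_injective hp.two_le ?_
    simpa [hcard] using (Module.natCard_eq_pow_finrank (K := ZMod p) (V := A)).symm
  have e : A ≃ₗ[ZMod p] ZMod p × ZMod p := LinearEquiv.ofFinrankEq _ _ <| by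
    rw [hrank, Module.finrank_prod, Module.finrank_self]
  exact ⟨e.toAddEquiv⟩

section Centralizers

variable {R : Type*} [NonUnitalRing R]

/-- The image in `R / Z(R)` of the centralizer of `r`, which is realized as the kernel of the
additive map `s ↦ r * s - s * r`. -/
def centralizerModCenter (r : R) : AddSubgroup (R ⧸ centerAddSubgroup R) :=
  (AddMonoidHom.mulLeft r - AddMonoidHom.mulRight r).ker.map
    (QuotientAddGroup.mk' (centerAddSubgroup R))

lemma mk_mem_centralizerModCenter {r s : R} :
    (s : R ⧸ centerAddSubgroup R) ∈ centralizerModCenter r ↔ r * s = s * r := by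
  have hker : centerAddSubgroup R ≤ (AddMonoidHom.mulLeft r - AddMonoidHom.mulRight r).ker :=
    fun z hz => by simpa [AddMonoidHom.mem_ker, sub_eq_zero] using hz r
  rw [← QuotientAddGroup.mk'_apply, centralizerModCenter, ← AddSubgroup.mem_comap,
    QuotientAddGroup.comap_map_mk', sup_eq_right.2 hker]
  simp [AddMonoidHom.mem_ker, sub_eq_zero]

lemma centralizerModCenter_eq_top_iff {r : R} :
    centralizerModCenter r = ⊤ ↔ r ∈ centerAddSubgroup R := by
  rw [AddSubgroup.eq_top_iff', QuotientAddGroup.forall_mk]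
  simp only [mk_mem_centralizerModCenter]
  exact forall_congr' fun _ => eq_comm

lemma centralizerModCenter_ne_bot {r : R} (hr : r ∉ centerAddSubgroup R) :
    centralizerModCenter r ≠ ⊥ := fun h =>
  hr <| (QuotientAddGroup.eq_zero_iff r).1 <| AddSubgroup.mem_bot.1 <|
    h ▸ mk_mem_centralizerModCenter.2 rfl

lemma ncard_Cent_eq_ncard_range :
    (Cent R).ncard = (Set.range (centralizerModCenter (R := R))).ncard := by
  have hpre : Function.Injective fun K : AddSubgroup (R ⧸ centerAddSubgroup R) =>
      ((↑) : R → R ⧸ centerAddSubgroup R) ⁻¹' (K : Set (R ⧸ centerAddSubgroup R)) :=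
    QuotientAddGroup.mk_surjective.preimage_injective.comp SetLike.coe_injective
  rw [← Set.ncard_image_of_injective _ hpre, ← Set.range_comp]
  refine congrArg (fun f : R → Set R => (Set.range f).ncard) ?_
  ext r s
  exact mk_mem_centralizerModCenter.symm

/-- The images in `R / Z(R)` of the centralizers of the noncentral elements of `R`. -/
noncomputable def properCentralizers (R : Type*) [NonUnitalRing R]
    [(centerAddSubgroup R).FiniteIndex] : Finset (AddSubgroup (R ⧸ centerAddSubgroup R)) :=
  (Set.toFinite (centralizerModCenter '' {r : R | r ∉ centerAddSubgroup R})).toFinset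

variable [(centerAddSubgroup R).FiniteIndex]

lemma mem_properCentralizers {K : AddSubgroup (R ⧸ centerAddSubgroup R)} :
    K ∈ properCentralizers R ↔ ∃ r ∉ centerAddSubgroup R, centralizerModCenter r = K := by
  simp [properCentralizers]

lemma centralizerModCenter_mem_properCentralizers {r : R} (hr : r ∉ centerAddSubgroup R) :
    centralizerModCenter r ∈ properCentralizers R :=
  mem_properCentralizers.2 ⟨r, hr, rfl⟩

lemma ncard_Cent_eq_card_properCentralizers_add_one :
    (Cent R).ncard = #(properCentralizers R) + 1 := by
  have htop : (⊤ : AddSubgroup (R ⧸ centerAddSubgroup R)) ∉ properCentralizers R := by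
    simp [mem_properCentralizers, centralizerModCenter_eq_top_iff]
  have hrange : Set.range (centralizerModCenter (R := R)) =
      insert ⊤ (properCentralizers R : Set (AddSubgroup (R ⧸ centerAddSubgroup R))) := by
    ext K
    simp only [Set.mem_range, Set.mem_insert_iff, mem_coe, mem_properCentralizers]
    constructor
    · rintro ⟨r, rfl⟩
      exact (em (r ∈ centerAddSubgroup R)).imp centralizerModCenter_eq_top_iff.2
        fun hr => ⟨r, hr, rfl⟩
    · rintro (rfl | ⟨r, -, hr⟩)
      · exact ⟨0, centralizerModCenter_eq_top_iff.2 (zero_mem _)⟩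
      · exact ⟨r, hr⟩
  rw [ncard_Cent_eq_ncard_range, hrange, Set.ncard_insert_of_notMem (by simpa using htop),
    Set.ncard_coe_finset]

lemma isProperCover_properCentralizers (hR : ∃ x y : R, x * y ≠ y * x) :
    IsProperCover (properCentralizers R) where
  exists_mem := by
    rw [QuotientAddGroup.forall_mk]
    intro g
    by_cases hg : g ∈ centerAddSubgroup R
    · obtain ⟨x, y, hxy⟩ := hR
      have hx : x ∉ centerAddSubgroup R := fun h => hxy (h y).symm
      exact ⟨_, centralizerModCenter_mem_properCentralizers hx,
        mk_mem_centralizerModCenter.2 (hg x)⟩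
    · exact ⟨_, centralizerModCenter_mem_properCentralizers hg, mk_mem_centralizerModCenter.2 rfl⟩
  ne_top K hK := by
    obtain ⟨r, hr, rfl⟩ := mem_properCentralizers.1 hK
    exact mt centralizerModCenter_eq_top_iff.1 hr

lemma sInf_properCentralizers :
    sInf (properCentralizers R : Set (AddSubgroup (R ⧸ centerAddSubgroup R))) = ⊥ := by
  refine eq_bot_iff.2 ?_
  intro q hq
  obtain ⟨s, rfl⟩ := QuotientAddGroup.mk_surjective q
  refine AddSubgroup.mem_bot.2 ((QuotientAddGroup.eq_zero_iff s).2 fun r => ?_)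
  by_cases hr : r ∈ centerAddSubgroup R
  · exact (hr s).symm
  · exact mk_mem_centralizerModCenter.1
      (AddSubgroup.mem_sInf.1 hq _ (centralizerModCenter_mem_properCentralizers hr))

end Centralizers

theorem cent_ge_p_add_two_general (p : ℕ) (hp : p.Prime) (R : Type*) [NonUnitalRing R]
    [(centerAddSubgroup R).FiniteIndex]
    (hmin : ∀ q : ℕ, q.Prime → q ∣ (centerAddSubgroup R).index → p ≤ q)
    (h : ∃ x y : R, x * y ≠ y * x) :
    p + 2 ≤ (Cent R).ncard ∧
      ((Cent R).ncard = p + 2 ↔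
        Nonempty ((R ⧸ centerAddSubgroup R) ≃+ (ZMod p × ZMod p))) := by
  have hcover := isProperCover_properCentralizers h
  have hindex : ∀ K ∈ properCentralizers R, p ≤ K.index := fun K hK =>
    le_index_of_forall_prime_dvd_card hmin (hcover.ne_top K hK)
  have hbot : ∀ K ∈ properCentralizers R, K ≠ ⊥ := fun K hK => by
    obtain ⟨r, hr, rfl⟩ := mem_properCentralizers.1 hK
    exact centralizerModCenter_ne_bot hr
  rw [ncard_Cent_eq_card_properCentralizers_add_one,
    nonempty_addEquiv_zmod_prod_zmod_iff hp hcover.not_isAddCyclic,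
    ← hcover.card_eq_add_one_iff hp hindex hbot sInf_properCentralizers]
  exact ⟨Nat.succ_le_succ (hcover.add_one_le_card hindex), Nat.succ_inj⟩

/-- For a noncommutative finite `p`-ring, `|Cent(R)| ≥ p + 2`, with equality iff
`R/Z(R) ≅ ℤ_p × ℤ_p` as additive groups. -/
theorem cent_ge_p_add_two (p : ℕ) (hp : p.Prime) (R : Type*) [NonUnitalRing R] [Finite R]
    (hcard : ∃ n : ℕ, Nat.card R = p ^ n) (h : ∃ x y : R, x * y ≠ y * x) :
    p + 2 ≤ (Cent R).ncard ∧
      ((Cent R).ncard = p + 2 ↔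
        Nonempty ((R ⧸ centerAddSubgroup R) ≃+ (ZMod p × ZMod p))) := by
  obtain ⟨n, hn⟩ := hcard
  refine cent_ge_p_add_two_general p hp R (fun q hq hdvd => ?_) h
  exact ((Nat.prime_dvd_prime_iff_eq hq hp).1 (hq.dvd_of_dvd_pow
    (hn ▸ hdvd.trans (AddSubgroup.index_dvd_card _)))).ge
end

section
/- Let p be a prime and let R be a noncommutative finite (not necessarily unital) ring whose order is a power of p. If |Cent(R)| = p + 2, then d(R) = (p² + p − 1)/p³. -/
/-- The commutativity degree of a finite ring: `d(R) = (1/|R|²) ∑_{r ∈ R} |C(r)|`. -/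
noncomputable def commDeg (R : Type*) [NonUnitalRing R] [Fintype R] : ℚ :=
  (∑ r : R, ((rCentralizer r).ncard : ℚ)) / ((Fintype.card R : ℚ)) ^ 2

/-!
Let `x` and `y` be noncommuting elements. The elements `0`, `x` and `a • x + y` for `a < p` have
pairwise different centralizers, because `⁅a • x + y, b • x + y⁆ = (a - b) • ⁅x, y⁆` and `⁅x, y⁆`
has order at least `p`. When there are only `p + 2` centralizers, these are all of them, for *every*
noncommuting pair. For the pair `x`, `s` this says that `y` commutes with some `a • x + s`, so
`⁅y, s⁆` is a multiple of `⁅y, x⁆`. For `p • x + y` in place of `y`, and `s = y`, it says that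
`(p - a) • ⁅x, y⁆ = 0`, so `⁅x, y⁆` has order exactly `p`. Hence the centralizer of a noncentral
element has index `p`, and the center, which is the intersection of the centralizers of `x` and
`y`, has index `p ^ 2`; the commutativity degree depends only on these two indices.
-/

section AddGroup

variable {G : Type*} [AddGroup G]

theorem le_addOrderOf_of_card_eq_prime_pow {p n : ℕ} (hp : p.Prime) (hG : Nat.card G = p ^ n)
    {c : G} (hc : c ≠ 0) : p ≤ addOrderOf c := by
  obtain ⟨k, -, hk⟩ := (Nat.dvd_prime_pow hp).mp (hG ▸ addOrderOf_dvd_natCard c)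
  have hk0 : k ≠ 0 := by
    rintro rfl
    exact hc (AddMonoid.addOrderOf_eq_one_iff.mp hk)
  exact hk ▸ Nat.le_self_pow hk0 p

theorem ncard_coe_mul_index (H : AddSubgroup G) : (H : Set G).ncard * H.index = Nat.card G :=
  H.card_mul_index

end AddGroup

section LieRing

variable {L : Type*} [LieRing L]

theorem lie_nsmul_add_nsmul_add (a b : ℕ) (x y : L) :
    ⁅a • x + y, b • x + y⁆ = a • ⁅x, y⁆ - b • ⁅x, y⁆ := by
  rw [add_lie, lie_add, lie_add, nsmul_lie, nsmul_lie, lie_nsmul, lie_nsmul, lie_self, lie_self,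
    ← lie_skew y x, smul_neg, smul_zero, smul_zero]
  abel

end LieRing

section NonUnitalRing

/-- A not necessarily unital ring as a Lie ring under the commutator `⁅x, y⁆ = x * y - y * x`; the
version in Mathlib, `LieRing.ofAssociativeRing`, assumes a unit. -/
abbrev lieRingOfNonUnitalRing (R : Type*) [NonUnitalRing R] : LieRing R where
  add_lie _ _ _ := by simp only [Ring.lie_def, add_mul, mul_add]; abel
  lie_add _ _ _ := by simp only [Ring.lie_def, add_mul, mul_add]; abel
  lie_self _ := by rw [Ring.lie_def, sub_self]
  leibniz_lie _ _ _ := by simp only [Ring.lie_def, mul_sub, sub_mul, mul_assoc]; abel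

attribute [local instance] lieRingOfNonUnitalRing

section Centralizer

variable {R : Type*} [NonUnitalRing R] {r s : R}

theorem mem_rCentralizer_iff_lie_eq_zero : s ∈ rCentralizer r ↔ ⁅r, s⁆ = 0 :=
  sub_eq_zero.symm

theorem mem_rCentralizer_self (r : R) : r ∈ rCentralizer r :=
  rfl

theorem mem_rCentralizer_comm : s ∈ rCentralizer r ↔ r ∈ rCentralizer s :=
  eq_comm

theorem rCentralizer_zero : rCentralizer (0 : R) = Set.univ :=
  Set.eq_univ_of_forall fun s => by rw [mem_rCentralizer_iff_lie_eq_zero, zero_lie]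

theorem mem_rCenter_iff_rCentralizer_eq_univ : r ∈ rCenter R ↔ rCentralizer r = Set.univ :=
  ⟨fun h => Set.eq_univ_of_forall fun s => (h s).symm,
    fun h s => (Set.eq_univ_iff_forall.mp h s).symm⟩

theorem exists_lie_ne_zero_of_notMem_rCenter (hr : r ∉ rCenter R) : ∃ s : R, ⁅s, r⁆ ≠ 0 := by
  by_contra! hcomm
  exact hr fun s => mem_rCentralizer_iff_lie_eq_zero.mpr (hcomm s)

theorem exists_lie_ne_zero_of_one_lt_ncard_Cent (h : 1 < (Cent R).ncard) :
    ∃ x y : R, ⁅x, y⁆ ≠ 0 := by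
  by_contra! hcomm
  have hsub : Cent R ⊆ {Set.univ} := by
    rintro _ ⟨r, rfl⟩
    exact Set.eq_univ_of_forall fun s => mem_rCentralizer_iff_lie_eq_zero.mpr (hcomm r s)
  exact absurd (Set.ncard_le_ncard hsub) (by rwa [Set.ncard_singleton, not_le])

variable (r) in
/-- The centralizer of `r` as an additive subgroup, encoded as the kernel of the inner derivation
`s ↦ ⁅r, s⁆` so that its index can be computed from the range of that map. -/
def rCentralizerAddSubgroup : AddSubgroup R :=
  (LieAlgebra.ad ℤ R r).toAddMonoidHom.ker

theorem coe_rCentralizerAddSubgroup : (rCentralizerAddSubgroup r : Set R) = rCentralizer r :=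
  Set.ext fun _ => mem_rCentralizer_iff_lie_eq_zero.symm

end Centralizer

section CommDeg

variable {R : Type*} [NonUnitalRing R] [Fintype R]

theorem commDeg_eq_of_forall_notMem_rCenter (k : ℕ)
    (hk : ∀ r ∉ rCenter R, (rCentralizer r).ncard * k = Fintype.card R) :
    commDeg R = 1 / k + (1 - 1 / k) * ((rCenter R).ncard / Fintype.card R) := by
  classical
  have hcentralizer (r : R) : ((rCentralizer r).ncard : ℚ) =
      Fintype.card R * (1 / k) + if r ∈ rCenter R then Fintype.card R * (1 - 1 / k : ℚ) else 0 := by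
    split_ifs with hr
    · rw [mem_rCenter_iff_rCentralizer_eq_univ.mp hr, Set.ncard_univ, Nat.card_eq_fintype_card]
      ring
    · have hk0 : (k : ℚ) ≠ 0 := by
        intro h0
        exact Fintype.card_ne_zero (α := R) (by rw [← hk r hr, Nat.cast_eq_zero.mp h0, mul_zero])
      rw [← hk r hr, Nat.cast_mul]
      field_simp
      ring
  have hcenter : (Finset.univ.filter (· ∈ rCenter R)).card = (rCenter R).ncard := by
    rw [← Set.ncard_coe_finset, Finset.coe_filter_univ, Set.ofPred_mem_eq]
  rw [commDeg, Finset.sum_congr rfl fun r _ => hcentralizer r, Finset.sum_add_distrib,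
    ← Finset.sum_filter, Finset.sum_const, Finset.sum_const, nsmul_eq_mul, nsmul_eq_mul, hcenter,
    Finset.card_univ]
  field_simp

end CommDeg

section Pencil

variable {R : Type*} [NonUnitalRing R] {p : ℕ} {x y : R}

variable (p x y) in
/-- The centralizers of `0` (entered as `Set.univ`), of `x` and of `a • x + y` for `a < p`. For `p`
prime, the last `p + 1` elements stand for the points of the projective line over `ZMod p` with
homogeneous coordinates in `x` and `y`. -/
def pencilCent : Set (Set R) :=
  insert Set.univ (insert (rCentralizer x) ((fun a : ℕ => rCentralizer (a • x + y)) '' Set.Iio p))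

theorem pencilCent_subset_Cent : pencilCent p x y ⊆ Cent R := by
  rintro _ (rfl | rfl | ⟨a, -, rfl⟩)
  exacts [⟨0, rCentralizer_zero⟩, ⟨x, rfl⟩, ⟨a • x + y, rfl⟩]

theorem notMem_rCentralizer_nsmul_add (hxy : ⁅x, y⁆ ≠ 0) (a : ℕ) :
    x ∉ rCentralizer (a • x + y) := by
  rwa [mem_rCentralizer_comm, mem_rCentralizer_iff_lie_eq_zero, lie_add, lie_nsmul, lie_self,
    smul_zero, zero_add]

theorem injOn_rCentralizer_nsmul_add (horder : p ≤ addOrderOf ⁅x, y⁆) :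
    Set.InjOn (fun a : ℕ => rCentralizer (a • x + y)) (Set.Iio p) := by
  intro a ha b hb hab
  have hcomm : b • x + y ∈ rCentralizer (a • x + y) :=
    hab.symm.subset (mem_rCentralizer_self (b • x + y))
  rw [mem_rCentralizer_iff_lie_eq_zero, lie_nsmul_add_nsmul_add, sub_eq_zero] at hcomm
  exact nsmul_injOn_Iio_addOrderOf (lt_of_lt_of_le ha horder) (lt_of_lt_of_le hb horder) hcomm

theorem ncard_pencilCent (horder : p ≤ addOrderOf ⁅x, y⁆) (hxy : ⁅x, y⁆ ≠ 0) :
    (pencilCent p x y).ncard = p + 2 := by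
  have hfin := (Set.finite_Iio p).image fun a : ℕ => rCentralizer (a • x + y)
  have hx : rCentralizer x ∉ (fun a : ℕ => rCentralizer (a • x + y)) '' Set.Iio p := by
    rintro ⟨a, -, ha⟩
    exact notMem_rCentralizer_nsmul_add hxy a (ha.symm.subset (mem_rCentralizer_self x))
  have huniv : Set.univ ∉
      insert (rCentralizer x) ((fun a : ℕ => rCentralizer (a • x + y)) '' Set.Iio p) := by
    rintro (hx | ⟨a, -, ha⟩)
    · exact hxy (mem_rCentralizer_iff_lie_eq_zero.mp (hx.subset (Set.mem_univ y)))
    · exact notMem_rCentralizer_nsmul_add hxy a (ha.symm.subset (Set.mem_univ x))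
  rw [pencilCent, Set.ncard_insert_of_notMem huniv (hfin.insert _),
    Set.ncard_insert_of_notMem hx hfin, (injOn_rCentralizer_nsmul_add horder).ncard_image,
    ← Finset.coe_Iio, Set.ncard_coe_finset, Nat.card_Iio]

theorem Cent_eq_pencilCent (horder : p ≤ addOrderOf ⁅x, y⁆) (hcent : (Cent R).ncard = p + 2)
    (hxy : ⁅x, y⁆ ≠ 0) : Cent R = pencilCent p x y :=
  (Set.eq_of_subset_of_ncard_le pencilCent_subset_Cent
    (by rw [hcent, ncard_pencilCent horder hxy])
    (Set.finite_of_ncard_ne_zero (by rw [hcent]; exact Nat.succ_ne_zero _))).symm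

theorem rCenter_eq_inter_rCentralizer (horder : p ≤ addOrderOf ⁅x, y⁆)
    (hcent : (Cent R).ncard = p + 2) (hxy : ⁅x, y⁆ ≠ 0) :
    rCenter R = rCentralizer x ∩ rCentralizer y := by
  refine Set.Subset.antisymm (fun s hs => ⟨hs x, hs y⟩) ?_
  rintro s ⟨hsx, hsy⟩ r
  change s ∈ rCentralizer r
  have hr : rCentralizer r ∈ pencilCent p x y := Cent_eq_pencilCent horder hcent hxy ▸ ⟨r, rfl⟩
  rcases hr with hr | hr | ⟨a, -, hr⟩
  · exact hr.symm.subset (Set.mem_univ s)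
  · exact hr.symm.subset hsx
  · rw [mem_rCentralizer_iff_lie_eq_zero] at hsx hsy
    rw [← hr, mem_rCentralizer_iff_lie_eq_zero, add_lie, nsmul_lie, hsx, hsy, smul_zero, add_zero]

end Pencil

section CentNcardEq

variable {R : Type*} [NonUnitalRing R] {p : ℕ} {x y : R}
  (horder : ∀ x y : R, ⁅x, y⁆ ≠ 0 → p ≤ addOrderOf ⁅x, y⁆) (hcent : (Cent R).ncard = p + 2)

include horder hcent

theorem exists_lie_nsmul_add_eq_zero {s : R} (hxy : ⁅x, y⁆ ≠ 0) (hxs : ⁅x, s⁆ ≠ 0) :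
    ∃ a < p, ⁅a • x + s, y⁆ = 0 := by
  have hx : x ∉ rCentralizer y := by
    rwa [mem_rCentralizer_comm, mem_rCentralizer_iff_lie_eq_zero]
  have hy : rCentralizer y ∈ pencilCent p x s :=
    Cent_eq_pencilCent (horder x s hxs) hcent hxs ▸ ⟨y, rfl⟩
  rcases hy with hy | hy | ⟨a, ha, hy⟩
  · exact absurd (hy.symm.subset (Set.mem_univ x)) hx
  · exact absurd (hy.symm.subset (mem_rCentralizer_self x)) hx
  · exact ⟨a, ha, mem_rCentralizer_iff_lie_eq_zero.mp (hy.symm.subset (mem_rCentralizer_self y))⟩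

theorem addOrderOf_lie_eq (hxy : ⁅x, y⁆ ≠ 0) : addOrderOf ⁅x, y⁆ = p := by
  have hshift : ⁅x, p • x + y⁆ ≠ 0 := by
    rwa [lie_add, lie_nsmul, lie_self, smul_zero, zero_add]
  obtain ⟨a, ha, hcomm⟩ := exists_lie_nsmul_add_eq_zero horder hcent hshift hxy
  rw [lie_nsmul_add_nsmul_add, sub_eq_zero] at hcomm
  have hzero : (p - a) • ⁅x, y⁆ = 0 := by
    rw [sub_nsmul _ ha.le, hcomm, add_neg_cancel]
  have hle : addOrderOf ⁅x, y⁆ ≤ p - a :=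
    addOrderOf_le_of_nsmul_eq_zero (Nat.sub_pos_of_lt ha) hzero
  exact le_antisymm (hle.trans (Nat.sub_le p a)) (horder x y hxy)

theorem lie_mem_zmultiples_lie (hxy : ⁅x, y⁆ ≠ 0) (s : R) :
    ⁅y, s⁆ ∈ AddSubgroup.zmultiples ⁅y, x⁆ := by
  have of_lie_ne_zero (t : R) (ht : ⁅x, t⁆ ≠ 0) : ⁅y, t⁆ ∈ AddSubgroup.zmultiples ⁅y, x⁆ := by
    obtain ⟨a, -, hcomm⟩ := exists_lie_nsmul_add_eq_zero horder hcent hxy ht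
    rw [← lie_skew, neg_eq_zero, lie_add, lie_nsmul] at hcomm
    rw [eq_neg_of_add_eq_zero_right hcomm]
    exact neg_mem (nsmul_mem (AddSubgroup.mem_zmultiples _) a)
  by_cases hs : ⁅x, s⁆ = 0
  · have hsy : ⁅x, s + y⁆ ≠ 0 := by rwa [lie_add, hs, zero_add]
    simpa only [lie_add, lie_self, add_zero] using of_lie_ne_zero (s + y) hsy
  · exact of_lie_ne_zero s hs

theorem relIndex_rCentralizerAddSubgroup (hxy : ⁅x, y⁆ ≠ 0) {K : AddSubgroup R} (hx : x ∈ K) :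
    (rCentralizerAddSubgroup y).relIndex K = p := by
  have hyx : ⁅y, x⁆ ≠ 0 := by rwa [← lie_skew, neg_ne_zero]
  have hmap : K.map (LieAlgebra.ad ℤ R y).toAddMonoidHom = AddSubgroup.zmultiples ⁅y, x⁆ := by
    refine le_antisymm ?_ (AddSubgroup.zmultiples_le_of_mem ⟨x, hx, rfl⟩)
    rintro _ ⟨s, -, rfl⟩
    exact lie_mem_zmultiples_lie horder hcent hxy s
  rw [rCentralizerAddSubgroup, AddSubgroup.relIndex_ker, hmap, Nat.card_zmultiples,
    addOrderOf_lie_eq horder hcent hyx]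

theorem index_rCentralizerAddSubgroup (hxy : ⁅x, y⁆ ≠ 0) :
    (rCentralizerAddSubgroup y).index = p := by
  rw [← AddSubgroup.relIndex_top_right]
  exact relIndex_rCentralizerAddSubgroup horder hcent hxy (AddSubgroup.mem_top x)

theorem ncard_rCentralizer_mul (hxy : ⁅x, y⁆ ≠ 0) :
    (rCentralizer y).ncard * p = Nat.card R := by
  rw [← ncard_coe_mul_index (rCentralizerAddSubgroup y), coe_rCentralizerAddSubgroup,
    index_rCentralizerAddSubgroup horder hcent hxy]

theorem ncard_rCenter_mul (hxy : ⁅x, y⁆ ≠ 0) : (rCenter R).ncard * p ^ 2 = Nat.card R := by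
  have hyx : ⁅y, x⁆ ≠ 0 := by rwa [← lie_skew, neg_ne_zero]
  have hcenter : rCenter R = ↑(rCentralizerAddSubgroup y ⊓ rCentralizerAddSubgroup x) := by
    rw [AddSubgroup.coe_inf, coe_rCentralizerAddSubgroup, coe_rCentralizerAddSubgroup]
    exact rCenter_eq_inter_rCentralizer (horder y x hyx) hcent hyx
  have hindex : (rCentralizerAddSubgroup y ⊓ rCentralizerAddSubgroup x).index = p ^ 2 := by
    rw [← AddSubgroup.relIndex_mul_index inf_le_right, AddSubgroup.inf_relIndex_right,
      relIndex_rCentralizerAddSubgroup horder hcent hxy (lie_self x),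
      index_rCentralizerAddSubgroup horder hcent hyx, sq]
  rw [hcenter, ← hindex, ncard_coe_mul_index]

end CentNcardEq

end NonUnitalRing

theorem commDeg_of_cent_eq_general (p : ℕ) (R : Type*) [NonUnitalRing R] [Fintype R]
    (horder : ∀ x y : R, x * y ≠ y * x → p ≤ addOrderOf (x * y - y * x))
    (hcent : (Cent R).ncard = p + 2) :
    commDeg R = ((p : ℚ) ^ 2 + p - 1) / (p : ℚ) ^ 3 := by
  have hlie (x y : R) (hxy : ⁅x, y⁆ ≠ 0) : p ≤ addOrderOf ⁅x, y⁆ := horder x y (sub_ne_zero.mp hxy)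
  obtain ⟨x, y, hxy⟩ : ∃ x y : R, ⁅x, y⁆ ≠ 0 :=
    exists_lie_ne_zero_of_one_lt_ncard_Cent (by rw [hcent]; exact Nat.le_add_left 2 p)
  have hcentralizer (r : R) (hr : r ∉ rCenter R) :
      (rCentralizer r).ncard * p = Fintype.card R := by
    obtain ⟨s, hs⟩ := exists_lie_ne_zero_of_notMem_rCenter hr
    rw [ncard_rCentralizer_mul hlie hcent hs, Nat.card_eq_fintype_card]
  have hcenter : (rCenter R).ncard * p ^ 2 = Fintype.card R := by
    rw [ncard_rCenter_mul hlie hcent hxy, Nat.card_eq_fintype_card]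
  have hprod : (rCenter R).ncard * p ^ 2 ≠ 0 := hcenter ▸ Fintype.card_ne_zero
  have hZ : (rCenter R).ncard ≠ 0 := left_ne_zero_of_mul hprod
  have hp0 : p ≠ 0 := (pow_ne_zero_iff two_ne_zero).mp (right_ne_zero_of_mul hprod)
  rw [commDeg_eq_of_forall_notMem_rCenter p hcentralizer, ← hcenter]
  push_cast
  field_simp
  ring

/-- For a noncommutative finite `p`-ring, `|Cent(R)| = p + 2` implies
`d(R) = (p² + p - 1)/p³`. -/
theorem commDeg_of_cent_eq (p : ℕ) (hp : p.Prime) (R : Type*) [NonUnitalRing R] [Fintype R]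
    (hcard : ∃ n : ℕ, Fintype.card R = p ^ n) (h : ∃ x y : R, x * y ≠ y * x)
    (hcent : (Cent R).ncard = p + 2) :
    commDeg R = ((p : ℚ) ^ 2 + p - 1) / (p : ℚ) ^ 3 := by
  obtain ⟨n, hn⟩ := hcard
  exact commDeg_of_cent_eq_general p R (fun x y hxy =>
    le_addOrderOf_of_card_eq_prime_pow hp (Nat.card_eq_fintype_card.trans hn)
      (sub_ne_zero.mpr hxy)) hcent
end
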